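/- arXiv:2503.21974 — 2 statements merged into one kernel-verified Lean document; each statement's English description precedes it below -/
import Mathlib

section
/- Let C and D be small categories and p : (C ⥤ Type u) ⥤ (D ⥤ Type u) a functor. The following are equivalent: (a) there exist a functor I : D ⥤ Type u and a functor A : (Elements of I)ᵒᵖ ⥤ (C ⥤ Type u) together with an isomorphism, natural in X : C ⥤ Type u and d : D, between p(X)(d) and the type Σ (i : I(d)), (A(d,i) ⟶ X) (up to universe lifting); (b) the functor (C ⥤ Type u) ⥤ Over(p(⊤)) sending X to the object p(X) equipped with p applied to the unique map X ⟶ ⊤ (where ⊤ denotes a terminal object of C ⥤ Type u) has a left adjoint (i.e. is a right adjoint). -/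
/-!
The isomorphism in (a) says that an element `y` of `p X d` is an index `i : I d`, its *shape*,
together with a map `A (d, i) ⟶ X`, its *content*.

**(a) implies (b).** Since maps to the terminal object carry no information, taking shapes is a
natural transformation `p ⊤ ⟶ I`, so an object `B` over `p ⊤` gives a functor
`B.left.Elements ⥤ I.Elements`. The left adjoint sends `B` to the colimit over `B.left.Elementsᵒᵖ`
of `A` restricted along this functor. Indeed a map `B ⟶ p X` over `p ⊤` picks, for each element
`b : B d`, an element of `p X d` whose shape is that of `b`; such an element is determined by its
content, and naturality in `d` says precisely that the contents form a cocone with point `X`.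

**(b) implies (a).** Let `L` be the left adjoint. Take `I = p ⊤`, and let `A (d, i)` be the value
of `L` at the map `coyoneda d ⟶ p ⊤` corresponding to `i`. By adjunction and the Yoneda lemma, a
map `A (d, i) ⟶ X` is an element of `p X d` lying over `i`, and summing over `i` recovers `p X d`.
-/

open CategoryTheory CategoryTheory.Limits

universe u

variable {C : Type u} [SmallCategory C] {D : Type u} [SmallCategory D]

/-- The functor `(C ⥤ Type u) ⥤ Over (p ⊤)` obtained by slicing `p` over the terminal
object: `X ↦ (p X, p (X ⟶ ⊤))`. -/
@[simps]
noncomputable def slicedOverTerminal (p : (C ⥤ Type u) ⥤ (D ⥤ Type u)) :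
    (C ⥤ Type u) ⥤ Over (p.obj (⊤_ (C ⥤ Type u))) where
  obj X := Over.mk (p.map (terminal.from X))
  map {X Y} g := Over.homMk (p.map g) (by
    dsimp
    rw [← p.map_comp, terminal.comp_from])
  map_id := by
    intro X
    ext
    simp
  map_comp := by
    intro X Y Z f g
    ext
    simp

open Opposite

/-! ### Shapes and contents -/

/-- The data of condition (a): a presentation of `p X d` as `Σ i : I d, (A (d, i) ⟶ X)`, natural
in `d` and in `X`. -/
structure PraData (p : (C ⥤ Type u) ⥤ (D ⥤ Type u)) where
  I : D ⥤ Type u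
  A : I.Elementsᵒᵖ ⥤ (C ⥤ Type u)
  iso : ∀ (X : C ⥤ Type u) (d : D),
    (p.obj X).obj d ≅ Σ i : I.obj d, (A.obj (Opposite.op ⟨d, i⟩) ⟶ X)
  nat_left : ∀ (X : C ⥤ Type u) {d d' : D} (f : d ⟶ d') (y : (p.obj X).obj d),
    (iso X d').hom ((p.obj X).map f y) =
      ⟨I.map f ((iso X d).hom y).1,
        A.map (CategoryOfElements.homMk (I.elementsMk d ((iso X d).hom y).1)
          (I.elementsMk d' (I.map f ((iso X d).hom y).1)) f rfl).op ≫ ((iso X d).hom y).2⟩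
  nat_right : ∀ {X X' : C ⥤ Type u} (g : X ⟶ X') (d : D) (y : (p.obj X).obj d),
    (iso X' d).hom ((p.map g).app d y) = ⟨((iso X d).hom y).1, ((iso X d).hom y).2 ≫ g⟩

namespace PraData

variable {p : (C ⥤ Type u) ⥤ (D ⥤ Type u)} (P : PraData p)

/-- The element of `p X d` with shape `i` and content `a`. -/
def elt {X : C ⥤ Type u} {d : D} (i : P.I.obj d) (a : P.A.obj (op ⟨d, i⟩) ⟶ X) :
    (p.obj X).obj d :=
  (P.iso X d).inv ⟨i, a⟩

lemma iso_elt {X : C ⥤ Type u} {d : D} (i : P.I.obj d) (a : P.A.obj (op ⟨d, i⟩) ⟶ X) :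
    (P.iso X d).hom (P.elt i a) = ⟨i, a⟩ :=
  Iso.inv_hom_id_apply (P.iso X d) _

lemma iso_injective (X : C ⥤ Type u) (d : D) :
    Function.Injective (P.iso X d).hom :=
  fun a b h => by
    simpa using congrArg (P.iso X d).inv h

lemma elt_iso {X : C ⥤ Type u} {d : D} (y : (p.obj X).obj d) :
    P.elt ((P.iso X d).hom y).1 ((P.iso X d).hom y).2 = y :=
  P.iso_injective _ _ (P.iso_elt _ _)

lemma elt_injective {X : C ⥤ Type u} {d : D} {i : P.I.obj d}
    {a a' : P.A.obj (op ⟨d, i⟩) ⟶ X} (h : P.elt i a = P.elt i a') : a = a' := by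
  have := congrArg (P.iso X d).hom h
  rw [iso_elt, iso_elt] at this
  exact eq_of_heq (Sigma.mk.inj this).2

/-- Naturality in `d`, with the shape of the image specified up to a propositional equality:
this replaces transport of contents along equalities of shapes. -/
lemma map_elt {X : C ⥤ Type u} {d d' : D} (f : d ⟶ d') (i : P.I.obj d) (i' : P.I.obj d')
    (hi : P.I.map f i = i') (a : P.A.obj (op ⟨d, i⟩) ⟶ X) :
    (p.obj X).map f (P.elt i a) =
      P.elt i' (P.A.map (CategoryOfElements.homMk (P.I.elementsMk d i)
        (P.I.elementsMk d' i') f hi).op ≫ a) := by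
  subst hi
  apply P.iso_injective
  rw [P.nat_left, iso_elt, iso_elt]

lemma app_elt {X X' : C ⥤ Type u} (g : X ⟶ X') {d : D} (i : P.I.obj d)
    (a : P.A.obj (op ⟨d, i⟩) ⟶ X) :
    (p.map g).app d (P.elt i a) = P.elt i (a ≫ g) := by
  apply P.iso_injective
  rw [P.nat_right, iso_elt, iso_elt]

/-- The shape map `p ⊤ ⟶ I`. -/
noncomputable def shape : p.obj (⊤_ (C ⥤ Type u)) ⟶ P.I where
  app d := ↾fun y => ((P.iso _ d).hom y).1
  naturality d d' f := by
    ext y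
    exact congrArg Sigma.fst (P.nat_left _ f y)

lemma shape_elt {d : D} (i : P.I.obj d) (a : P.A.obj (op ⟨d, i⟩) ⟶ ⊤_ (C ⥤ Type u)) :
    P.shape.app d (P.elt i a) = i :=
  congrArg Sigma.fst (P.iso_elt i a)

/-- Every element of `p ⊤ d` is determined by its shape. -/
lemma eq_elt_of_shape {d : D} (y : (p.obj (⊤_ (C ⥤ Type u))).obj d) (i : P.I.obj d)
    (h : P.shape.app d y = i) (a : P.A.obj (op ⟨d, i⟩) ⟶ ⊤_ (C ⥤ Type u)) :
    y = P.elt i a := by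
  obtain ⟨⟨j, b⟩, rfl⟩ : ∃ s : Σ j : P.I.obj d, (P.A.obj (op ⟨d, j⟩) ⟶ ⊤_ (C ⥤ Type u)),
      P.elt s.1 s.2 = y := ⟨_, P.elt_iso y⟩
  obtain rfl : j = i := (P.shape_elt j b).symm.trans h
  exact congrArg (P.elt _) (Subsingleton.elim _ _)

/-! ### The left adjoint as a colimit -/

variable (B : Over (p.obj (⊤_ (C ⥤ Type u))))

/-- The shape of an element of an object over `p ⊤`. -/
noncomputable abbrev shapeOf : B.left ⟶ P.I := B.hom ≫ P.shape

/-- The diagram whose colimit is the left adjoint at `B`: it sends an element `b` of `B` to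
`A (d, i)`, where `i` is the shape of `b`. -/
noncomputable def diagram : B.left.Elementsᵒᵖ ⥤ (C ⥤ Type u) :=
  (NatTrans.mapElements (P.shapeOf B)).op ⋙ P.A

/-- The element `b : B d` as an object of the category indexing `diagram`. -/
noncomputable abbrev idx {d : D} (b : B.left.obj d) : B.left.Elementsᵒᵖ := op (B.left.elementsMk d b)

variable {B}

/-- The map `B ⟶ p X` over `p ⊤` whose content at `b` is the component of `h` at `b`. -/
noncomputable def toOver {X : C ⥤ Type u} (h : colimit (P.diagram B) ⟶ X) :
    B ⟶ (slicedOverTerminal p).obj X :=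
  Over.homMk
    { app := fun d => ↾fun b =>
        P.elt ((P.shapeOf B).app d b) (colimit.ι (P.diagram B) (idx B b) ≫ h)
      naturality := fun d d' f => by
        ext b
        have hb : P.I.map f ((P.shapeOf B).app d b) = (P.shapeOf B).app d' (B.left.map f b) :=
          ((P.shapeOf B).naturality_apply f b).symm
        refine Eq.trans ?_ (P.map_elt f _ _ hb _).symm
        refine congrArg (P.elt _) ?_
        exact (congrArg (· ≫ h) (colimit.w (P.diagram B) (CategoryOfElements.homMk
          (B.left.elementsMk d b) (B.left.elementsMk d' (B.left.map f b)) f rfl).op).symm).trans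
          (Category.assoc _ _ _) }
    (by
      ext d b
      refine (P.app_elt (terminal.from X) _ _).trans ?_
      exact (P.eq_elt_of_shape (B.hom.app d b) _ rfl _).symm)

lemma toOver_app {X : C ⥤ Type u} (h : colimit (P.diagram B) ⟶ X) {d : D} (b : B.left.obj d) :
    (P.toOver h).left.app d b =
      P.elt ((P.shapeOf B).app d b) (colimit.ι (P.diagram B) (idx B b) ≫ h) :=
  rfl

lemma toOver_injective (X : C ⥤ Type u) :
    Function.Injective (P.toOver (B := B) (X := X)) := by
  intro h h' e
  apply colimit.hom_ext
  rintro ⟨d, b⟩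
  apply P.elt_injective (i := (P.shapeOf B).app d b)
  exact (P.toOver_app h b).symm.trans ((congrArg (fun k => k.left.app d b) e).trans
    (P.toOver_app h' b))

/-- The contents of the elements `g b` form a cocone by naturality of `g`, and `toOver` sends the
map it induces on the colimit to `g`. -/
lemma toOver_surjective (X : C ⥤ Type u) :
    Function.Surjective (P.toOver (B := B) (X := X)) := by
  intro g
  have key : ∀ (d : D) (b : B.left.obj d),
      ∃ a : (P.diagram B).obj (idx B b) ⟶ X,
        g.left.app d b = P.elt ((P.shapeOf B).app d b) a := by
    intro d b
    -- The shape of `g b` is that of `b`, because `g` is a map over `p ⊤`.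
    have hs : (P.shapeOf B).app d b = ((P.iso X d).hom (g.left.app d b)).1 := by
      have h1 : B.hom.app d b = (p.map (terminal.from X)).app d (g.left.app d b) := by
        rw [← Over.w g]
        rfl
      have h2 := congrArg ((p.map (terminal.from X)).app d) (P.elt_iso (g.left.app d b))
      exact congrArg (P.shape.app d) (h1.trans (h2.symm.trans (P.app_elt _ _ _))) |>.trans
        (P.shape_elt _ _)
    change ∃ a : P.A.obj (op ⟨d, (P.shapeOf B).app d b⟩) ⟶ X, _
    rw [hs]
    exact ⟨_, (P.elt_iso _).symm⟩
  choose a ha using key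
  let c : Cocone (P.diagram B) :=
    { pt := X
      ι :=
        { app := fun j => a j.unop.1 j.unop.2
          naturality := by
            -- Contents over a fixed shape may be compared as elements of `p X`.
            rintro ⟨d', b'⟩ ⟨d, b⟩ ⟨f, hf⟩
            change d ⟶ d' at f
            change B.left.map f b = b' at hf
            subst hf
            refine Eq.trans ?_ (Category.comp_id _).symm
            apply P.elt_injective (i := (P.shapeOf B).app d' (B.left.map f b))
            have hb : P.I.map f ((P.shapeOf B).app d b) =
                (P.shapeOf B).app d' (B.left.map f b) :=
              ((P.shapeOf B).naturality_apply f b).symm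
            refine (P.map_elt f _ _ hb (a d b)).symm.trans ?_
            rw [← ha]
            exact (g.left.naturality_apply f b).symm.trans (ha _ _) } }
  refine ⟨colimit.desc _ c, ?_⟩
  ext d b
  refine (P.toOver_app _ b).trans ?_
  exact (congrArg (P.elt _) (colimit.ι_desc c (idx B b))).trans (ha d b).symm

theorem isRightAdjoint {p : (C ⥤ Type u) ⥤ (D ⥤ Type u)} (P : PraData p) :
    (slicedOverTerminal p).IsRightAdjoint :=
  (Adjunction.adjunctionOfEquivLeft
    (fun B X => Equiv.ofBijective (P.toOver (B := B) (X := X))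
      ⟨P.toOver_injective X, P.toOver_surjective X⟩)
    (by
      intro B X X' g h
      ext d b
      refine Eq.trans ?_ (P.app_elt g _ _).symm
      exact congrArg (P.elt _) (Category.assoc _ _ _).symm)).isRightAdjoint

end PraData

/-! ### From a left adjoint to a presentation -/

section Converse

/-- The functor sending an element `i : I d` to the corresponding map `coyoneda d ⟶ I`. -/
noncomputable def elementsToOver (I : D ⥤ Type u) : I.Elementsᵒᵖ ⥤ Over I where
  obj x := Over.mk (coyonedaEquiv.symm x.unop.2)
  map {x y} f := Over.homMk (coyoneda.map f.unop.1.op) (by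
    dsimp
    rw [← coyonedaEquiv_symm_map, f.unop.2])
  map_id x := by
    ext
    simp
  map_comp f g := by
    ext
    simp

variable {p : (C ⥤ Type u) ⥤ (D ⥤ Type u)}

/-- The map over `p ⊤` classifying an element `y` of `p X d` that lies over `i`. -/
noncomputable def classify {X : C ⥤ Type u} {d : D} (y : (p.obj X).obj d)
    (i : (p.obj (⊤_ (C ⥤ Type u))).obj d) (h : (p.map (terminal.from X)).app d y = i) :
    (elementsToOver (p.obj (⊤_ (C ⥤ Type u)))).obj (op ⟨d, i⟩) ⟶ (slicedOverTerminal p).obj X :=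
  Over.homMk (coyonedaEquiv.symm y) (by
    apply coyonedaEquiv.injective
    refine (coyonedaEquiv_comp _ _).trans ?_
    refine (congrArg ((p.map (terminal.from X)).app d) (coyonedaEquiv.apply_symm_apply y)).trans ?_
    exact h.trans (coyonedaEquiv.apply_symm_apply i).symm)

/-- Every map over `p ⊤` out of a representable classifies an element, by the Yoneda lemma. -/
lemma exists_classify {X : C ⥤ Type u} {d : D} {i : (p.obj (⊤_ (C ⥤ Type u))).obj d}
    (g : (elementsToOver (p.obj (⊤_ (C ⥤ Type u)))).obj (op ⟨d, i⟩) ⟶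
      (slicedOverTerminal p).obj X) :
    ∃ y h, g = classify y i h := by
  let g' : coyoneda.obj (op d) ⟶ p.obj X := g.left
  refine ⟨coyonedaEquiv g', ?_, ?_⟩
  · have h : g' ≫ p.map (terminal.from X) = coyonedaEquiv.symm i := Over.w g
    rw [← coyonedaEquiv_comp, h, Equiv.apply_symm_apply]
  · apply Over.OverMorphism.ext
    exact (coyonedaEquiv.symm_apply_apply g').symm

lemma classify_map {X : C ⥤ Type u} {d d' : D} (f : d ⟶ d') (y : (p.obj X).obj d)
    (i : (p.obj (⊤_ (C ⥤ Type u))).obj d) (h : (p.map (terminal.from X)).app d y = i)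
    (i' : (p.obj (⊤_ (C ⥤ Type u))).obj d')
    (h' : (p.map (terminal.from X)).app d' ((p.obj X).map f y) = i')
    (hi : (p.obj (⊤_ (C ⥤ Type u))).map f i = i') :
    classify ((p.obj X).map f y) i' h' =
      (elementsToOver (p.obj (⊤_ (C ⥤ Type u)))).map
        (CategoryOfElements.homMk (Functor.elementsMk _ d i) (Functor.elementsMk _ d' i') f hi).op ≫
        classify y i h := by
  apply Over.OverMorphism.ext
  exact coyonedaEquiv_symm_map f y

lemma classify_comp {X X' : C ⥤ Type u} (g : X ⟶ X') {d : D} (y : (p.obj X).obj d)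
    (i : (p.obj (⊤_ (C ⥤ Type u))).obj d) (h : (p.map (terminal.from X)).app d y = i)
    (h' : (p.map (terminal.from X')).app d ((p.map g).app d y) = i) :
    classify ((p.map g).app d y) i h' = classify y i h ≫ (slicedOverTerminal p).map g := by
  apply Over.OverMorphism.ext
  apply coyonedaEquiv.injective
  refine (coyonedaEquiv.apply_symm_apply _).trans ?_
  refine Eq.trans ?_ (coyonedaEquiv_comp (coyonedaEquiv.symm y) (p.map g)).symm
  rw [Equiv.apply_symm_apply]

variable {L : Over (p.obj (⊤_ (C ⥤ Type u))) ⥤ (C ⥤ Type u)} (adj : L ⊣ slicedOverTerminal p)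

/-- The index and the map `L (coyoneda d ⟶ p ⊤) ⟶ X` associated with an element of `p X d`. -/
noncomputable def decompose (X : C ⥤ Type u) (d : D) (y : (p.obj X).obj d) :
    Σ i : (p.obj (⊤_ (C ⥤ Type u))).obj d,
      ((elementsToOver (p.obj (⊤_ (C ⥤ Type u))) ⋙ L).obj (op ⟨d, i⟩) ⟶ X) :=
  ⟨(p.map (terminal.from X)).app d y, (adj.homEquiv _ _).symm (classify y _ rfl)⟩

/-- The value of `decompose` with the index specified up to a propositional equality. -/
lemma decompose_eq {X : C ⥤ Type u} {d : D} (y : (p.obj X).obj d)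
    (i : (p.obj (⊤_ (C ⥤ Type u))).obj d) (h : (p.map (terminal.from X)).app d y = i) :
    decompose adj X d y = ⟨i, (adj.homEquiv _ _).symm (classify y i h)⟩ := by
  subst h
  rfl

lemma decompose_bijective (X : C ⥤ Type u) (d : D) :
    Function.Bijective (decompose adj X d) := by
  constructor
  · intro y y' e
    -- First make the indices syntactically equal, so that the second components can be compared.
    have h : (p.map (terminal.from X)).app d y = (p.map (terminal.from X)).app d y' :=
      congrArg Sigma.fst e
    rw [decompose_eq adj y _ h, decompose_eq adj y' _ rfl] at e
    have e' := (adj.homEquiv _ _).symm.injective (eq_of_heq (Sigma.mk.inj e).2)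
    exact coyonedaEquiv.symm.injective (congrArg (fun k => k.left) e')
  · rintro ⟨i, a⟩
    obtain ⟨g, rfl⟩ := (adj.homEquiv _ _).symm.surjective a
    obtain ⟨y, h, rfl⟩ := exists_classify g
    exact ⟨y, decompose_eq adj y i h⟩

/-- A left adjoint of the sliced functor yields the data of condition (a), with `I = p ⊤`. -/
noncomputable def PraData.ofAdjunction : PraData p where
  I := p.obj (⊤_ (C ⥤ Type u))
  A := elementsToOver _ ⋙ L
  iso X d := (Equiv.ofBijective _ (decompose_bijective adj X d)).toIso
  nat_left X d d' f y := by
    have h : (p.map (terminal.from X)).app d' ((p.obj X).map f y) =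
        (p.obj (⊤_ (C ⥤ Type u))).map f ((p.map (terminal.from X)).app d y) :=
      (p.map (terminal.from X)).naturality_apply f y
    refine (decompose_eq adj _ _ h).trans ?_
    rw [classify_map f y _ rfl _ h rfl, Adjunction.homEquiv_naturality_left_symm]
    rfl
  nat_right {X X'} g d y := by
    have h : (p.map (terminal.from X')).app d ((p.map g).app d y) =
        (p.map (terminal.from X)).app d y := by
      rw [← terminal.comp_from g, p.map_comp]
      rfl
    refine (decompose_eq adj _ _ h).trans ?_
    rw [classify_comp g y _ rfl h, Adjunction.homEquiv_naturality_right_symm]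
    rfl

end Converse

/-- for a functor `p : (C ⥤ Type u) ⥤ (D ⥤ Type u)` between copresheaf
categories on small categories, the following are equivalent:
(a) there are `I : D ⥤ Type u` and `A : (El I)ᵒᵖ ⥤ (C ⥤ Type u)` with an isomorphism
`p X d ≅ Σ (i : I d), (A (d,i) ⟶ X)`, natural in `X` and `d`;
(b) the induced functor `(C ⥤ Type u) ⥤ Over (p ⊤)` is a right adjoint. -/
theorem pra_tfae (p : (C ⥤ Type u) ⥤ (D ⥤ Type u)) :
    (∃ (I : D ⥤ Type u) (A : I.Elementsᵒᵖ ⥤ (C ⥤ Type u))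
      (iso : ∀ (X : C ⥤ Type u) (d : D),
        (p.obj X).obj d ≅ Σ i : I.obj d, (A.obj (Opposite.op ⟨d, i⟩) ⟶ X)),
      -- naturality in `d`
      (∀ (X : C ⥤ Type u) {d d' : D} (f : d ⟶ d') (y : (p.obj X).obj d),
        (iso X d').hom ((p.obj X).map f y) =
          ⟨I.map f ((iso X d).hom y).1,
            A.map (CategoryOfElements.homMk (I.elementsMk d ((iso X d).hom y).1)
              (I.elementsMk d' (I.map f ((iso X d).hom y).1)) f rfl).op ≫
              ((iso X d).hom y).2⟩) ∧
      -- naturality in `X`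
      (∀ {X X' : C ⥤ Type u} (g : X ⟶ X') (d : D) (y : (p.obj X).obj d),
        (iso X' d).hom ((p.map g).app d y) =
          ⟨((iso X d).hom y).1, ((iso X d).hom y).2 ≫ g⟩))
    ↔ (slicedOverTerminal p).IsRightAdjoint := by
  constructor
  · rintro ⟨I, A, iso, h, h'⟩
    exact PraData.isRightAdjoint ⟨I, A, iso, h, h'⟩
  · rintro ⟨L, ⟨adj⟩⟩
    let P := PraData.ofAdjunction adj
    exact ⟨P.I, P.A, P.iso, P.nat_left, P.nat_right⟩
end

section
/- Let C be a small category, I a type, and A : I → Type a family of types. Then the following data forms a category S_C(I,A): objects are pairs (i, c) with i : I and c : A(i) → ob C; a morphism from (i, c) to (i', c') is an element of Π (a' : A(i')), Σ (a : A(i)), (c(a) ⟶ c'(a')); the identity on (i, c) sends a to (a, 𝟙_{c(a)}); and the composite of φ : (i,c) ⟶ (i',c') and ψ : (i',c') ⟶ (i'',c'') sends a'' to (a, f ≫ g), where ψ(a'') = (a', g) and φ(a') = (a, f). That is, this composition is associative and unital. -/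
open CategoryTheory

universe u v w x

variable (C : Type u) [Category.{v} C] (I : Type w) (A : I → Type x)

/-- Objects of the selection category: pairs `(i, c)` with `i : I` and `c : A i → ob C`. -/
def SelObj : Type _ := Σ i : I, (A i → C)

variable {C I A}

/-- Morphisms `(i, c) ⟶ (i', c')` of the selection category:
elements of `Π (a' : A i'), Σ (a : A i), (c a ⟶ c' a')`. -/
def SelHom (x y : SelObj C I A) : Type _ :=
  ∀ a' : A y.1, Σ a : A x.1, (x.2 a ⟶ y.2 a')

/-- The identity on `(i, c)`: `a ↦ (a, 𝟙 (c a))`. -/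
def selId (x : SelObj C I A) : SelHom x x := fun a => ⟨a, 𝟙 (x.2 a)⟩

/-- The composite of `φ : (i,c) ⟶ (i',c')` and `ψ : (i',c') ⟶ (i'',c'')`:
`a'' ↦ (a, f ≫ g)` where `ψ a'' = (a', g)` and `φ a' = (a, f)`. -/
def selComp {x y z : SelObj C I A} (φ : SelHom x y) (ψ : SelHom y z) : SelHom x z :=
  fun a'' => ⟨(φ (ψ a'').1).1, (φ (ψ a'').1).2 ≫ (ψ a'').2⟩

/-- the data of objects `(i, c)`, morphisms
`Π (a' : A i'), Σ (a : A i), (c a ⟶ c' a')`, identities `a ↦ (a, 𝟙)` and the composition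
above forms a category: composition is unital and associative. -/
theorem selection_is_category :
    (∀ (x y : SelObj C I A) (φ : SelHom x y), selComp (selId x) φ = φ) ∧
    (∀ (x y : SelObj C I A) (φ : SelHom x y), selComp φ (selId y) = φ) ∧
    (∀ (x y z w : SelObj C I A) (φ : SelHom x y) (ψ : SelHom y z) (χ : SelHom z w),
      selComp (selComp φ ψ) χ = selComp φ (selComp ψ χ)) := by
  -- After function extensionality the first components agree definitionally, so each law
  -- reduces to the corresponding law of `C` in the second component.
  refine ⟨fun x y φ => funext fun a => ?_, fun x y φ => funext fun a => ?_,
    fun x y z w φ ψ χ => funext fun a => ?_⟩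
  · exact congrArg (Sigma.mk (φ a).1) (Category.id_comp (φ a).2)
  · exact congrArg (Sigma.mk (φ a).1) (Category.comp_id (φ a).2)
  · exact congrArg (Sigma.mk _) (Category.assoc _ _ _)
end
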